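/- arXiv:1104.5154 — 8 statements merged into one kernel-verified Lean document; each statement's English description precedes it below -/
import Mathlib

section
/- For all real numbers h₁ > 0, h₂ > 0, ρ > 0 and ν > 0, the quantity Δ = (h₁⁴ + 4ρh₁³h₂ + 12ρ²h₁²h₂²)ν² + 4ρh₁h₂²(2ρh₂ − h₁)ν + 4ρ²h₂⁴ is strictly positive. Consequently the first-order (inviscid) bi-layer system ∂_t h₁ + ∂_x(λh₁²(ρh₂/2 + h₁/3)) = 0, ∂_t h₂ + ∂_x(λh₁h₂(ρh₂ + h₁/2) + (λρ/(3ν))h₂³) = 0 is strictly hyperbolic at every state with h₁ > 0 and h₂ > 0. -/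
open Matrix Polynomial

/-- For positive layer depths `h₁, h₂`, density ratio `ρ` and viscosity ratio `ν`, the
quantity `Δ` is strictly positive; consequently the Jacobian of the inviscid bi-layer flux
has two distinct real eigenvalues at every such state, i.e. the first-order bi-layer
system is strictly hyperbolic there. -/
theorem bilayer_inviscid_strictly_hyperbolic
    (h₁ h₂ ρ ν lam : ℝ) (hh₁ : 0 < h₁) (hh₂ : 0 < h₂) (hρ : 0 < ρ) (hν : 0 < ν)
    (hlam : 0 < lam)
    (Δ : ℝ)
    (hΔ : Δ = (h₁ ^ 4 + 4 * ρ * h₁ ^ 3 * h₂ + 12 * ρ ^ 2 * h₁ ^ 2 * h₂ ^ 2) * ν ^ 2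
        + 4 * ρ * h₁ * h₂ ^ 2 * (2 * ρ * h₂ - h₁) * ν + 4 * ρ ^ 2 * h₂ ^ 4)
    (J : Matrix (Fin 2) (Fin 2) ℝ)
    (hJ : J = lam • !![h₁ ^ 2 + ρ * h₁ * h₂, ρ * h₁ ^ 2 / 2;
                       ρ * h₂ ^ 2 + h₁ * h₂, 2 * ρ * h₁ * h₂ + h₁ ^ 2 / 2 + ρ * h₂ ^ 2 / ν]) :
    0 < Δ ∧ ∃ a b : ℝ, a < b ∧ J.charpoly = (X - C a) * (X - C b) := by
  constructor
  · have e : Δ = (2 * ρ * h₁ * h₂ * ν - h₁ ^ 2 * ν + 2 * ρ * h₂ ^ 2) ^ 2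
        + 8 * ν ^ 2 * ρ * h₁ ^ 2 * (ρ * h₂ ^ 2 + h₁ * h₂) := by
      rw [hΔ]; ring
    rw [e]
    positivity
  · have hbc : 0 < J 0 1 * J 1 0 := by
      have e1 : J 0 1 = lam * (ρ * h₁ ^ 2 / 2) := by rw [hJ]; simp
      have e2 : J 1 0 = lam * (ρ * h₂ ^ 2 + h₁ * h₂) := by rw [hJ]; simp
      rw [e1, e2]
      positivity
    have hD : 0 < (J 0 0 - J 1 1) ^ 2 + 4 * (J 0 1 * J 1 0) := by positivity
    obtain ⟨s, hs, hs2⟩ : ∃ s : ℝ, 0 < s ∧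
        s ^ 2 = (J 0 0 - J 1 1) ^ 2 + 4 * (J 0 1 * J 1 0) :=
      ⟨_, Real.sqrt_pos.mpr hD, Real.sq_sqrt hD.le⟩
    refine ⟨(J 0 0 + J 1 1 - s) / 2, (J 0 0 + J 1 1 + s) / 2, by linarith, ?_⟩
    have ht : J.trace = (J 0 0 + J 1 1 - s) / 2 + (J 0 0 + J 1 1 + s) / 2 := by
      rw [Matrix.trace_fin_two]; ring
    have hd : J.det = (J 0 0 + J 1 1 - s) / 2 * ((J 0 0 + J 1 1 + s) / 2) := by
      rw [Matrix.det_fin_two]; linear_combination (1 / 4) * hs2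
    rw [Matrix.charpoly_fin_two, ht, hd, C_add, C_mul]
    ring
end

section
/- Regard Δ(ν) = (h₁⁴ + 4ρh₁³h₂ + 12ρ²h₁²h₂²)ν² + 4ρh₁h₂²(2ρh₂ − h₁)ν + 4ρ²h₂⁴ as a quadratic polynomial in ν with coefficients depending on h₁, h₂, ρ. Its discriminant satisfies the identity (4ρh₁h₂²(2ρh₂ − h₁))² − 4(h₁⁴ + 4ρh₁³h₂ + 12ρ²h₁²h₂²)(4ρ²h₂⁴) = −128ρ³h₁²h₂⁵(h₁ + ρh₂), which is strictly negative whenever h₁ > 0, h₂ > 0 and ρ > 0; since the leading coefficient h₁⁴ + 4ρh₁³h₂ + 12ρ²h₁²h₂² is then strictly positive, Δ(ν) > 0 for every ν ∈ ℝ. -/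
/-- The discriminant (in ν) of the quadratic Δ(ν) governing strict hyperbolicity of the
inviscid bi-layer shallow-water system equals −128ρ³h₁²h₂⁵(h₁ + ρh₂); it is strictly
negative for positive layer depths and density ratio, the leading coefficient is positive,
and hence Δ(ν) > 0 for every real ν. -/
theorem bilayer_discriminant_in_nu_negative
    (h₁ h₂ ρ : ℝ) (hh₁ : 0 < h₁) (hh₂ : 0 < h₂) (hρ : 0 < ρ) :
    ((4 * ρ * h₁ * h₂ ^ 2 * (2 * ρ * h₂ - h₁)) ^ 2
        - 4 * (h₁ ^ 4 + 4 * ρ * h₁ ^ 3 * h₂ + 12 * ρ ^ 2 * h₁ ^ 2 * h₂ ^ 2)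
            * (4 * ρ ^ 2 * h₂ ^ 4)
      = -128 * ρ ^ 3 * h₁ ^ 2 * h₂ ^ 5 * (h₁ + ρ * h₂))
    ∧ ((4 * ρ * h₁ * h₂ ^ 2 * (2 * ρ * h₂ - h₁)) ^ 2
        - 4 * (h₁ ^ 4 + 4 * ρ * h₁ ^ 3 * h₂ + 12 * ρ ^ 2 * h₁ ^ 2 * h₂ ^ 2)
            * (4 * ρ ^ 2 * h₂ ^ 4) < 0)
    ∧ (0 < h₁ ^ 4 + 4 * ρ * h₁ ^ 3 * h₂ + 12 * ρ ^ 2 * h₁ ^ 2 * h₂ ^ 2)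
    ∧ ∀ ν : ℝ,
        0 < (h₁ ^ 4 + 4 * ρ * h₁ ^ 3 * h₂ + 12 * ρ ^ 2 * h₁ ^ 2 * h₂ ^ 2) * ν ^ 2
          + 4 * ρ * h₁ * h₂ ^ 2 * (2 * ρ * h₂ - h₁) * ν + 4 * ρ ^ 2 * h₂ ^ 4 := by
  have quad : ∀ a b c : ℝ, 0 < a → b ^ 2 - 4 * a * c < 0 →
      ∀ x : ℝ, 0 < a * x ^ 2 + b * x + c := by
    intro a b c ha hd x
    have h : 0 < (4 * a) * (a * x ^ 2 + b * x + c) := by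
      nlinarith [sq_nonneg (2 * a * x + b)]
    exact pos_of_mul_pos_right h (by positivity)
  have hid : (4 * ρ * h₁ * h₂ ^ 2 * (2 * ρ * h₂ - h₁)) ^ 2
        - 4 * (h₁ ^ 4 + 4 * ρ * h₁ ^ 3 * h₂ + 12 * ρ ^ 2 * h₁ ^ 2 * h₂ ^ 2)
            * (4 * ρ ^ 2 * h₂ ^ 4)
      = -128 * ρ ^ 3 * h₁ ^ 2 * h₂ ^ 5 * (h₁ + ρ * h₂) := by ring
  have hneg : (4 * ρ * h₁ * h₂ ^ 2 * (2 * ρ * h₂ - h₁)) ^ 2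
        - 4 * (h₁ ^ 4 + 4 * ρ * h₁ ^ 3 * h₂ + 12 * ρ ^ 2 * h₁ ^ 2 * h₂ ^ 2)
            * (4 * ρ ^ 2 * h₂ ^ 4) < 0 := by
    rw [hid]
    have : 0 < 128 * ρ ^ 3 * h₁ ^ 2 * h₂ ^ 5 * (h₁ + ρ * h₂) := by positivity
    linarith
  have hpos : 0 < h₁ ^ 4 + 4 * ρ * h₁ ^ 3 * h₂ + 12 * ρ ^ 2 * h₁ ^ 2 * h₂ ^ 2 := by
    positivity
  exact ⟨hid, hneg, hpos, quad _ _ _ hpos hneg⟩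
end

section
/- Fix reals h₁ > 0, h₂ > 0, ρ > 0, ν > 0 and λ > 0, and let J be the 2×2 real matrix J = λ · [[h₁² + ρh₁h₂, ρh₁²/2], [ρh₂² + h₁h₂, 2ρh₁h₂ + h₁²/2 + ρh₂²/ν]] (the Jacobian with respect to (h₁,h₂) of the inviscid bi-layer flux (λh₁²(ρh₂/2 + h₁/3), λh₁h₂(ρh₂ + h₁/2) + (λρ/(3ν))h₂³)). Then J has exactly two eigenvalues, both real and distinct, given by Λ± = (λ/(4ν)) (2ρh₂² + 6ρν h₁h₂ + 3ν h₁² ± √Δ), where Δ = (h₁⁴ + 4ρh₁³h₂ + 12ρ²h₁²h₂²)ν² + 4ρh₁h₂²(2ρh₂ − h₁)ν + 4ρ²h₂⁴ > 0. -/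
open Matrix

/-- The Jacobian of the inviscid bi-layer flux has exactly two eigenvalues, both real and
distinct, given by `Λ± = (λ/(4ν)) (2ρh₂² + 6ρν h₁h₂ + 3ν h₁² ± √Δ)` with `Δ > 0`. -/
theorem bilayer_jacobian_eigenvalues
    (h₁ h₂ ρ ν lam : ℝ) (hh₁ : 0 < h₁) (hh₂ : 0 < h₂) (hρ : 0 < ρ) (hν : 0 < ν)
    (hlam : 0 < lam)
    (J : Matrix (Fin 2) (Fin 2) ℝ)
    (hJ : J = lam • !![h₁ ^ 2 + ρ * h₁ * h₂, ρ * h₁ ^ 2 / 2;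
                       ρ * h₂ ^ 2 + h₁ * h₂, 2 * ρ * h₁ * h₂ + h₁ ^ 2 / 2 + ρ * h₂ ^ 2 / ν])
    (Δ : ℝ)
    (hΔ : Δ = (h₁ ^ 4 + 4 * ρ * h₁ ^ 3 * h₂ + 12 * ρ ^ 2 * h₁ ^ 2 * h₂ ^ 2) * ν ^ 2
        + 4 * ρ * h₁ * h₂ ^ 2 * (2 * ρ * h₂ - h₁) * ν + 4 * ρ ^ 2 * h₂ ^ 4)
    (Λp Λm : ℝ)
    (hΛp : Λp = lam / (4 * ν)
        * (2 * ρ * h₂ ^ 2 + 6 * ρ * ν * h₁ * h₂ + 3 * ν * h₁ ^ 2 + Real.sqrt Δ))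
    (hΛm : Λm = lam / (4 * ν)
        * (2 * ρ * h₂ ^ 2 + 6 * ρ * ν * h₁ * h₂ + 3 * ν * h₁ ^ 2 - Real.sqrt Δ)) :
    0 < Δ ∧ Λm < Λp ∧
      ∀ z : ℂ, (J.map (algebraMap ℝ ℂ)).charpoly.IsRoot z ↔ z = (Λp : ℂ) ∨ z = (Λm : ℂ) := by
  have hpos : 0 < Δ := by
    have e : Δ = (ν * h₁ ^ 2 - 2 * ρ * ν * h₁ * h₂ - 2 * ρ * h₂ ^ 2) ^ 2
        + 8 * ν ^ 2 * ρ * h₁ ^ 2 * (ρ * h₂ ^ 2 + h₁ * h₂) := by rw [hΔ]; ring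
    rw [e]; positivity
  have hs : 0 < Real.sqrt Δ := Real.sqrt_pos.mpr hpos
  have hsq : Real.sqrt Δ ^ 2 = Δ := Real.sq_sqrt hpos.le
  have hν' : ν ≠ 0 := hν.ne'
  refine ⟨hpos, ?_, ?_⟩
  · rw [hΛp, hΛm]
    apply mul_lt_mul_of_pos_left _ (by positivity)
    linarith
  · have htr : J.trace = Λp + Λm := by
      rw [hJ, hΛp, hΛm, Matrix.trace_fin_two]
      simp
      field_simp
      ring
    have hdet : J.det = Λp * Λm := by
      have e : Λp * Λm = (lam / (4 * ν)) ^ 2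
          * ((2 * ρ * h₂ ^ 2 + 6 * ρ * ν * h₁ * h₂ + 3 * ν * h₁ ^ 2) ^ 2
            - Real.sqrt Δ ^ 2) := by
        rw [hΛp, hΛm]; ring
      rw [e, hsq, hΔ, hJ, Matrix.det_fin_two]
      simp
      field_simp
      ring
    intro z
    have hc : (J.map (algebraMap ℝ ℂ)).charpoly.eval z = (z - Λp) * (z - Λm) := by
      rw [Matrix.charpoly_map, Matrix.charpoly_fin_two, htr, hdet]
      simp
      ring
    rw [Polynomial.IsRoot.def, hc, mul_eq_zero, sub_eq_zero, sub_eq_zero]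
end

section
/- Fix reals h₁ > 0, h₂ > 0, ρ > 0, ν > 0 and λ ∈ ℝ, and let u₁, u₂ be the zeroth-order bi-layer velocity profiles with layer averages ū₁, ū₂. Then the integrals of the squared velocities decompose exactly as ∫₀^{h₁} u₁(z)² dz = h₁ ū₁² + Q₁ and ∫_{h₁}^{h₁+h₂} u₂(z)² dz = h₂ ū₂² + Q₂, where Q₁ = λ² h₁³ (h₁²/45 + (ρh₂/12)(h₁ + ρh₂)) and Q₂ = λ² ρ² h₂⁵ / (45 ν²). -/
theorem quartic_integral (c h a b d e f : ℝ) :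
    (∫ z in c..(c + h), (a + b * (z - c) + d * (z - c) ^ 2 + e * (z - c) ^ 3 + f * (z - c) ^ 4))
      = a * h + b * h ^ 2 / 2 + d * h ^ 3 / 3 + e * h ^ 4 / 4 + f * h ^ 5 / 5 := by
  rw [intervalIntegral.integral_eq_sub_of_hasDerivAt
    (f := fun z => a * (z - c) + b / 2 * (z - c) ^ 2 + d / 3 * (z - c) ^ 3
      + e / 4 * (z - c) ^ 4 + f / 5 * (z - c) ^ 5)]
  · ring
  · intro z _
    have h1 : HasDerivAt (fun z : ℝ => z - c) 1 z := (hasDerivAt_id z).sub_const c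
    have := ((((h1.const_mul a).add ((h1.pow 2).const_mul (b / 2))).add
      ((h1.pow 3).const_mul (d / 3))).add ((h1.pow 4).const_mul (e / 4))).add
      ((h1.pow 5).const_mul (f / 5))
    refine this.congr_deriv ?_
    norm_num
    ring
  · apply Continuous.intervalIntegrable
    fun_prop

theorem quadratic_flux (c h a b d : ℝ) (hh : h ≠ 0) (u : ℝ → ℝ)
    (hu : ∀ z, u z = a + b * (z - c) + d * (z - c) ^ 2) :
    (∫ z in c..(c + h), u z) = a * h + b * h ^ 2 / 2 + d * h ^ 3 / 3 ∧
    (∫ z in c..(c + h), (u z) ^ 2) = h * ((∫ z in c..(c + h), u z) / h) ^ 2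
      + (b ^ 2 * h ^ 3 / 12 + b * d * h ^ 4 / 6 + 4 * d ^ 2 * h ^ 5 / 45) := by
  have e1 : (∫ z in c..(c + h), u z) = a * h + b * h ^ 2 / 2 + d * h ^ 3 / 3 := by
    have := quartic_integral c h a b d 0 0
    simpa [hu] using this
  refine ⟨e1, ?_⟩
  have e2 := quartic_integral c h (a ^ 2) (2 * a * b) (b ^ 2 + 2 * a * d) (2 * b * d) (d ^ 2)
  have e3 : (fun z => (u z) ^ 2) = fun z => a ^ 2 + 2 * a * b * (z - c)
      + (b ^ 2 + 2 * a * d) * (z - c) ^ 2 + 2 * b * d * (z - c) ^ 3 + d ^ 2 * (z - c) ^ 4 := by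
    funext z
    rw [hu]
    ring
  rw [e3, e2, e1]
  field_simp
  ring

/-- Exact decomposition of the momentum fluxes of the zeroth-order bi-layer velocity
profiles: `∫₀^{h₁} u₁² = h₁ū₁² + Q₁` and `∫_{h₁}^{h₁+h₂} u₂² = h₂ū₂² + Q₂`, with
`Q₁ = λ²h₁³(h₁²/45 + (ρh₂/12)(h₁ + ρh₂))` and `Q₂ = λ²ρ²h₂⁵/(45ν²)`. -/
theorem bilayer_momentum_flux_decomposition
    (h₁ h₂ ρ ν lam : ℝ) (hh₁ : 0 < h₁) (hh₂ : 0 < h₂) (hρ : 0 < ρ) (hν : 0 < ν)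
    (u₁ u₂ : ℝ → ℝ)
    (hu₁ : ∀ z, u₁ z = lam * (ρ * h₂ * z + h₁ * z - z ^ 2 / 2))
    (hu₂ : ∀ z, u₂ z = lam * h₁ * (ρ * h₂ + h₁ / 2)
        + lam * ρ / ν * (h₂ * (z - h₁) - (z - h₁) ^ 2 / 2))
    (ub₁ ub₂ : ℝ)
    (hub₁ : ub₁ = (∫ z in (0:ℝ)..h₁, u₁ z) / h₁)
    (hub₂ : ub₂ = (∫ z in h₁..(h₁ + h₂), u₂ z) / h₂) :
    (∫ z in (0:ℝ)..h₁, (u₁ z) ^ 2)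
      = h₁ * ub₁ ^ 2 + lam ^ 2 * h₁ ^ 3 * (h₁ ^ 2 / 45 + ρ * h₂ / 12 * (h₁ + ρ * h₂))
    ∧ (∫ z in h₁..(h₁ + h₂), (u₂ z) ^ 2)
      = h₂ * ub₂ ^ 2 + lam ^ 2 * ρ ^ 2 * h₂ ^ 5 / (45 * ν ^ 2) := by
  have k1 := (quadratic_flux 0 h₁ 0 (lam * (ρ * h₂ + h₁)) (-lam / 2) hh₁.ne' u₁
    (fun z => by rw [hu₁]; ring)).2
  have k2 := (quadratic_flux h₁ h₂ (lam * h₁ * (ρ * h₂ + h₁ / 2)) (lam * ρ / ν * h₂)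
    (-(lam * ρ / ν) / 2) hh₂.ne' u₂ (fun z => by rw [hu₂]; ring)).2
  rw [zero_add] at k1
  rw [← hub₁] at k1
  rw [← hub₂] at k2
  constructor
  · rw [k1]
    ring
  · rw [k2]
    field_simp
    ring
end

section
/- Fix reals h₁ > 0, h₂ > 0, ρ > 0, ν > 0 and λ ∈ ℝ, and let u₁ be the zeroth-order lower-layer velocity profile with layer average ū₁. Then the wall shear stress satisfies the exact closure u₁′(0) = γ₁(h₁,h₂) · ū₁ / h₁, where γ₁(h₁,h₂) = 6(h₁ + ρh₂)/(2h₁ + 3ρh₂); in particular γ₁(h₁, 0) = 3, recovering the single-layer closure. -/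
/-- Exact wall-shear-stress closure for the zeroth-order bi-layer lower velocity profile:
`u₁'(0) = γ₁(h₁,h₂) ū₁ / h₁` with `γ₁(h₁,h₂) = 6(h₁+ρh₂)/(2h₁+3ρh₂)`, and
`γ₁(h₁,0) = 3`, recovering the single-layer closure. -/
theorem bilayer_wall_stress_closure
    (h₁ h₂ ρ ν lam : ℝ) (hh₁ : 0 < h₁) (hh₂ : 0 < h₂) (hρ : 0 < ρ) (hν : 0 < ν)
    (u₁ : ℝ → ℝ)
    (hu₁ : ∀ z, u₁ z = lam * (ρ * h₂ * z + h₁ * z - z ^ 2 / 2))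
    (ub₁ : ℝ)
    (hub₁ : ub₁ = (∫ z in (0:ℝ)..h₁, u₁ z) / h₁)
    (γ₁ : ℝ → ℝ → ℝ)
    (hγ₁ : ∀ a b, γ₁ a b = 6 * (a + ρ * b) / (2 * a + 3 * ρ * b)) :
    deriv u₁ 0 = γ₁ h₁ h₂ * ub₁ / h₁ ∧ γ₁ h₁ 0 = 3 := by
  have hfun : u₁ = fun z => lam * (ρ * h₂ * z + h₁ * z - z ^ 2 / 2) := funext hu₁
  have hd : HasDerivAt u₁ (lam * (ρ * h₂ + h₁)) 0 := by
    rw [hfun]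
    have h := ((((hasDerivAt_id (0:ℝ)).const_mul (ρ * h₂)).add
      ((hasDerivAt_id (0:ℝ)).const_mul h₁)).sub
      (((hasDerivAt_id (0:ℝ)).pow 2).div_const 2)).const_mul lam
    refine h.congr_deriv ?_
    simp
  have hint : (∫ z in (0:ℝ)..h₁, u₁ z) = lam * h₁ ^ 2 * (2 * h₁ + 3 * ρ * h₂) / 6 := by
    have key : ∀ x ∈ Set.uIcc (0:ℝ) h₁, HasDerivAt
        (fun z : ℝ => lam * ((ρ * h₂ + h₁) / 2 * z ^ 2 - z ^ 3 / 6)) (u₁ x) x := by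
      intro x _
      have h := ((((hasDerivAt_id x).pow 2).const_mul ((ρ * h₂ + h₁) / 2)).sub
        (((hasDerivAt_id x).pow 3).div_const 6)).const_mul lam
      refine h.congr_deriv ?_
      rw [hu₁]
      norm_num only [id, Nat.cast_ofNat]
      ring
    have hc : Continuous u₁ := by
      rw [hfun]
      fun_prop
    rw [intervalIntegral.integral_eq_sub_of_hasDerivAt key (hc.intervalIntegrable _ _)]
    ring
  have hpos : 2 * h₁ + 3 * ρ * h₂ ≠ 0 := by positivity
  have hne : h₁ ≠ 0 := hh₁.ne'
  constructor
  · rw [hd.deriv, hγ₁, hub₁, hint]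
    field_simp
    ring
  · rw [hγ₁]
    simp only [mul_zero, add_zero]
    field_simp
    norm_num
end

section
/- Fix reals h₁ > 0, h₂ > 0, ρ > 0, ν > 0 and λ ∈ ℝ, and let u₁ be the zeroth-order lower-layer velocity profile with layer average ū₁. Then the interfacial velocity satisfies the exact closure u₁(h₁) = γ₂(h₁,h₂) · ū₁, where γ₂(h₁,h₂) = 3(h₁ + 2ρh₂)/(2h₁ + 3ρh₂). -/
/-- Exact interfacial-velocity closure for the zeroth-order bi-layer lower velocity
profile: `u₁(h₁) = γ₂(h₁,h₂) ū₁` with `γ₂(h₁,h₂) = 3(h₁+2ρh₂)/(2h₁+3ρh₂)`. -/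
theorem bilayer_interfacial_velocity_closure
    (h₁ h₂ ρ ν lam : ℝ) (hh₁ : 0 < h₁) (hh₂ : 0 < h₂) (hρ : 0 < ρ) (hν : 0 < ν)
    (u₁ : ℝ → ℝ)
    (hu₁ : ∀ z, u₁ z = lam * (ρ * h₂ * z + h₁ * z - z ^ 2 / 2))
    (ub₁ : ℝ)
    (hub₁ : ub₁ = (∫ z in (0:ℝ)..h₁, u₁ z) / h₁)
    (γ₂ : ℝ → ℝ → ℝ)
    (hγ₂ : ∀ a b, γ₂ a b = 3 * (a + 2 * ρ * b) / (2 * a + 3 * ρ * b)) :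
    u₁ h₁ = γ₂ h₁ h₂ * ub₁ := by
  have hI : (∫ z in (0:ℝ)..h₁, u₁ z) = lam * (ρ * h₂ * h₁ ^ 2 / 2 + h₁ ^ 3 / 2 - h₁ ^ 3 / 6) := by
    have hd : ∀ z ∈ Set.uIcc (0:ℝ) h₁, HasDerivAt
        (fun z : ℝ => lam * ((ρ * h₂ + h₁) / 2 * z ^ 2 - z ^ 3 / 6)) (u₁ z) z := by
      intro z _
      have h := ((((hasDerivAt_pow 2 z).const_mul ((ρ * h₂ + h₁) / 2)).sub
        ((hasDerivAt_pow 3 z).div_const 6)).const_mul lam)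
      refine h.congr_deriv ?_
      rw [hu₁]
      norm_num
      ring_nf
      try simp
    have hc : Continuous u₁ := by
      rw [funext hu₁]
      fun_prop
    rw [intervalIntegral.integral_eq_sub_of_hasDerivAt hd (hc.intervalIntegrable _ _)]
    ring
  have hpos : 2 * h₁ + 3 * ρ * h₂ ≠ 0 := by positivity
  rw [hub₁, hI, hγ₂, hu₁]
  field_simp
  ring
end

section
/- Fix reals h₁ > 0, h₂ > 0, ρ > 0, ν > 0 and λ ∈ ℝ, and let u₂ be the zeroth-order upper-layer velocity profile with layer average ū₂. Then the interfacial shear stress of the upper layer satisfies the exact closure u₂′(h₁) = 3 (ū₂ − u₂(h₁)) / h₂, i.e. the shear at the interface equals three times the difference between the layer-averaged velocity and the interfacial velocity, divided by the layer depth. -/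
/-- Exact interfacial-shear-stress closure for the zeroth-order bi-layer upper velocity
profile: `u₂'(h₁) = 3(ū₂ − u₂(h₁))/h₂`. -/
theorem bilayer_interfacial_shear_closure
    (h₁ h₂ ρ ν lam : ℝ) (hh₁ : 0 < h₁) (hh₂ : 0 < h₂) (hρ : 0 < ρ) (hν : 0 < ν)
    (u₂ : ℝ → ℝ)
    (hu₂ : ∀ z, u₂ z = lam * h₁ * (ρ * h₂ + h₁ / 2)
        + lam * ρ / ν * (h₂ * (z - h₁) - (z - h₁) ^ 2 / 2))
    (ub₂ : ℝ)
    (hub₂ : ub₂ = (∫ z in h₁..(h₁ + h₂), u₂ z) / h₂) :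
    deriv u₂ h₁ = 3 * (ub₂ - u₂ h₁) / h₂ := by
  have hfun : u₂ = fun z => lam * h₁ * (ρ * h₂ + h₁ / 2)
        + lam * ρ / ν * (h₂ * (z - h₁) - (z - h₁) ^ 2 / 2) := funext hu₂
  have hcont : Continuous u₂ := by
    rw [hfun]; fun_prop
  have hd : HasDerivAt u₂ (lam * ρ / ν * h₂) h₁ := by
    rw [hfun]
    have h0 : HasDerivAt (fun z : ℝ => z - h₁) 1 h₁ := (hasDerivAt_id h₁).sub_const h₁
    have h := (((h0.const_mul h₂).sub ((h0.pow 2).div_const 2)).const_mul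
      (lam * ρ / ν)).const_add (lam * h₁ * (ρ * h₂ + h₁ / 2))
    refine h.congr_deriv ?_
    simp
  have hI : ∫ z in h₁..(h₁ + h₂), u₂ z
      = lam * h₁ * (ρ * h₂ + h₁ / 2) * h₂ + lam * ρ / ν * (h₂ ^ 3 / 3) := by
    have hF : ∀ z ∈ Set.uIcc h₁ (h₁ + h₂), HasDerivAt
        (fun z : ℝ => lam * h₁ * (ρ * h₂ + h₁ / 2) * (z - h₁)
          + lam * ρ / ν * (h₂ * ((z - h₁) ^ 2 / 2) - (z - h₁) ^ 3 / 6)) (u₂ z) z := by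
      intro z _
      have h0 : HasDerivAt (fun z : ℝ => z - h₁) 1 z := (hasDerivAt_id z).sub_const h₁
      have h := (h0.const_mul (lam * h₁ * (ρ * h₂ + h₁ / 2))).add
        (((((h0.pow 2).div_const 2).const_mul h₂).sub ((h0.pow 3).div_const 6)).const_mul
        (lam * ρ / ν))
      refine h.congr_deriv ?_
      rw [hu₂]
      push_cast
      ring
    rw [intervalIntegral.integral_eq_sub_of_hasDerivAt hF (hcont.intervalIntegrable _ _)]
    ring
  rw [hd.deriv, hub₂, hI, hu₂ h₁]
  field_simp
  ring
end

section
/- Let J and d be real 2×2 matrices, and suppose J has two distinct real eigenvalues Λ̄₁ > Λ̄₂. Assume the low-frequency stability conditions tr(adj(J − Λ̄₁ I₂) · d) < 0 and tr(adj(J − Λ̄₂ I₂) · d) > 0, where adj denotes the adjugate (transposed cofactor) matrix. Then there exists k₀ > 0 such that for every real k with 0 < |k| < k₀, every complex root Λ of the dispersion relation det(Λ I₂ + i k J + k² d) = 0 satisfies Re Λ < 0. Conversely, if one of the two inequalities is strictly reversed, then there exists k₀ > 0 such that for every real k with 0 < |k| < k₀ the dispersion relation has a root with Re Λ > 0. 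-/
open Matrix Polynomial

theorem aux_small (m c : ℝ) (hm : 0 < m) :
    ∃ k₀ : ℝ, 0 < k₀ ∧ ∀ k : ℝ, 0 < |k| → |k| < k₀ → k ^ 2 * |c| < m := by
  have hc : 0 < |c| + 1 := by positivity
  refine ⟨min 1 (m / (|c| + 1)), lt_min one_pos (div_pos hm hc), ?_⟩
  intro k hk0 hk
  have h1 := lt_of_lt_of_le hk (min_le_left _ _)
  have h2 := lt_of_lt_of_le hk (min_le_right _ _)
  rw [lt_div_iff₀ hc] at h2
  have h3 : k ^ 2 ≤ |k| := by
    rw [← sq_abs]; nlinarith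
  have h4 : k ^ 2 * |c| ≤ |k| * |c| := mul_le_mul_of_nonneg_right h3 (abs_nonneg c)
  nlinarith

/-- The dispersion determinant factors, and its two roots satisfy the Routh-Hurwitz identities. -/
theorem aux_roots (J d : Matrix (Fin 2) (Fin 2) ℝ) (Λ₁ Λ₂ : ℝ)
    (hcp : J.charpoly = (X - C Λ₁) * (X - C Λ₂)) (k : ℝ) :
    ∃ r₁ r₂ : ℂ, (∀ Λ : ℂ, (Λ • (1 : Matrix (Fin 2) (Fin 2) ℂ)
            + (Complex.I * (k : ℂ)) • J.map (algebraMap ℝ ℂ)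
            + ((k : ℂ) ^ 2) • d.map (algebraMap ℝ ℂ)).det = (Λ - r₁) * (Λ - r₂)) ∧
      r₁.re + r₂.re = - (k ^ 2 * d.trace) ∧
      r₁.re * r₂.re * ((r₁.re + r₂.re) ^ 2 + (r₁.im - r₂.im) ^ 2) =
        k ^ 6 * (-(((J - Λ₁ • 1).adjugate * d).trace * ((J - Λ₂ • 1).adjugate * d).trace)
          + k ^ 2 * (d.det * d.trace ^ 2)) ∧
      (Λ₁ - Λ₂) * d.trace =
        ((J - Λ₂ • 1).adjugate * d).trace - ((J - Λ₁ • 1).adjugate * d).trace := by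
  have hs : J 0 0 + J 1 1 = Λ₁ + Λ₂ := by
    have e0 := congrArg (Polynomial.eval 0) hcp
    have e1 := congrArg (Polynomial.eval 1) hcp
    simp [Matrix.charpoly_fin_two, Matrix.trace_fin_two] at e0 e1
    linarith
  have hp : J 0 0 * J 1 1 - J 0 1 * J 1 0 = Λ₁ * Λ₂ := by
    have e0 := congrArg (Polynomial.eval 0) hcp
    simp [Matrix.charpoly_fin_two, Matrix.trace_fin_two, Matrix.det_fin_two] at e0
    linarith
  set q : ℝ := J 1 1 * d 0 0 - J 0 1 * d 1 0 - J 1 0 * d 0 1 + J 0 0 * d 1 1 with hq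
  set τ : ℝ := d.trace with hτ
  set δ : ℝ := d.det with hδ
  have ht : ∀ L : ℝ, ((J - L • 1).adjugate * d).trace = q - L * τ := by
    intro L
    rw [hq, hτ, Matrix.trace_fin_two, Matrix.trace_fin_two, Matrix.mul_apply, Matrix.mul_apply,
      Fin.sum_univ_two, Fin.sum_univ_two, Matrix.adjugate_fin_two]
    simp
    ring
  rw [ht, ht]
  obtain ⟨a, ha⟩ : ∃ a : ℂ, a = Complex.I * k * (Λ₁ + Λ₂) + k ^ 2 * τ := ⟨_, rfl⟩
  obtain ⟨b, hb⟩ : ∃ b : ℂ, b = -(k ^ 2 * (Λ₁ * Λ₂)) + Complex.I * k ^ 3 * q + k ^ 4 * δ :=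
    ⟨_, rfl⟩
  obtain ⟨w, hw⟩ := IsAlgClosed.exists_pow_nat_eq (a ^ 2 - 4 * b) (n := 2) (by norm_num)
  obtain ⟨r₁, hr1⟩ : ∃ r : ℂ, r = (-a + w) / 2 := ⟨_, rfl⟩
  obtain ⟨r₂, hr2⟩ : ∃ r : ℂ, r = (-a - w) / 2 := ⟨_, rfl⟩
  have hsum : r₁ + r₂ = -a := by rw [hr1, hr2]; ring
  have hprod : r₁ * r₂ = b := by rw [hr1, hr2]; linear_combination (-1 / 4) * hw
  have hre := congrArg Complex.re hsum
  have him := congrArg Complex.im hsum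
  have pre := congrArg Complex.re hprod
  have pim := congrArg Complex.im hprod
  have a1 : a.re = k ^ 2 * τ := by
    rw [ha]; simp [← Complex.ofReal_pow, ← Complex.ofReal_mul, ← Complex.ofReal_add]
  have a2 : a.im = k * (Λ₁ + Λ₂) := by
    rw [ha]; simp [← Complex.ofReal_pow, ← Complex.ofReal_mul, ← Complex.ofReal_add]
  have b1 : b.re = -(k ^ 2 * (Λ₁ * Λ₂)) + k ^ 4 * δ := by
    rw [hb]; simp [← Complex.ofReal_pow, ← Complex.ofReal_mul, ← Complex.ofReal_add]
  have b2 : b.im = k ^ 3 * q := by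
    rw [hb]; simp [← Complex.ofReal_pow, ← Complex.ofReal_mul, ← Complex.ofReal_add]
  simp only [Complex.add_re, Complex.add_im, Complex.neg_re, Complex.neg_im, Complex.mul_re,
    Complex.mul_im, a1, a2, b1, b2] at hre him pre pim
  refine ⟨r₁, r₂, ?_, hre, ?_, by ring⟩
  · intro Λ
    have hsC : (J 0 0 : ℂ) + J 1 1 = Λ₁ + Λ₂ := by exact_mod_cast hs
    have hpC : (J 0 0 : ℂ) * J 1 1 - J 0 1 * J 1 0 = Λ₁ * Λ₂ := by exact_mod_cast hp
    have hqC : (q : ℂ) = J 1 1 * d 0 0 - J 0 1 * d 1 0 - J 1 0 * d 0 1 + J 0 0 * d 1 1 := by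
      rw [hq]; push_cast; ring
    have hτC : (τ : ℂ) = d 0 0 + d 1 1 := by
      rw [hτ, Matrix.trace_fin_two]; push_cast; ring
    have hδC : (δ : ℂ) = d 0 0 * d 1 1 - d 0 1 * d 1 0 := by
      rw [hδ, Matrix.det_fin_two]; push_cast; ring
    have e : (Λ - r₁) * (Λ - r₂) = Λ ^ 2 + a * Λ + b := by
      linear_combination (-Λ) * hsum + hprod
    rw [e, ha, hb, hqC, hτC, hδC, ← hsC, ← hpC, Matrix.det_fin_two]
    simp
    linear_combination (k ^ 2 * ((J 0 0 : ℂ) * J 1 1 - J 0 1 * J 1 0)) * Complex.I_sq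
  · have key : r₁.re * r₂.re * ((r₁.re + r₂.re) ^ 2 + (r₁.im - r₂.im) ^ 2) =
        (r₁.re + r₂.re) ^ 2 * (r₁.re * r₂.re - r₁.im * r₂.im)
        + (r₁.re + r₂.re) * (r₁.im + r₂.im) * (r₁.re * r₂.im + r₁.im * r₂.re)
        - (r₁.re * r₂.im + r₁.im * r₂.re) ^ 2 := by ring
    rw [key, hre, him, pre, pim]
    ring

/-- Low-frequency spectral stability criterion: if `J` has two distinct real eigenvalues
`Λ̄₁ > Λ̄₂` and `tr(adj(J − Λ̄₁ I) d) < 0`, `tr(adj(J − Λ̄₂ I) d) > 0`, then for all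
sufficiently small nonzero wavenumbers `k` every root `Λ` of
`det(Λ I + i k J + k² d) = 0` has `Re Λ < 0`; if one of the two sign conditions is
strictly reversed, then for all sufficiently small nonzero `k` there is a root with
`Re Λ > 0`. -/
theorem dispersion_relation_low_frequency_stability
    (J d : Matrix (Fin 2) (Fin 2) ℝ) (Λ₁ Λ₂ : ℝ) (hΛ : Λ₂ < Λ₁)
    (hcp : J.charpoly = (X - C Λ₁) * (X - C Λ₂)) :
    ((((J - Λ₁ • 1).adjugate * d).trace < 0 ∧ 0 < ((J - Λ₂ • 1).adjugate * d).trace) →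
      ∃ k₀ : ℝ, 0 < k₀ ∧ ∀ k : ℝ, 0 < |k| → |k| < k₀ → ∀ Λ : ℂ,
        (Λ • (1 : Matrix (Fin 2) (Fin 2) ℂ)
            + (Complex.I * (k : ℂ)) • J.map (algebraMap ℝ ℂ)
            + ((k : ℂ) ^ 2) • d.map (algebraMap ℝ ℂ)).det = 0 → Λ.re < 0)
    ∧ ((0 < ((J - Λ₁ • 1).adjugate * d).trace ∨ ((J - Λ₂ • 1).adjugate * d).trace < 0) →
      ∃ k₀ : ℝ, 0 < k₀ ∧ ∀ k : ℝ, 0 < |k| → |k| < k₀ → ∃ Λ : ℂ,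
        (Λ • (1 : Matrix (Fin 2) (Fin 2) ℂ)
            + (Complex.I * (k : ℂ)) • J.map (algebraMap ℝ ℂ)
            + ((k : ℂ) ^ 2) • d.map (algebraMap ℝ ℂ)).det = 0 ∧ 0 < Λ.re) := by
  constructor
  · rintro ⟨h1, h2⟩
    obtain ⟨k₀, hk₀, H⟩ := aux_small
      (-(((J - Λ₁ • 1).adjugate * d).trace * ((J - Λ₂ • 1).adjugate * d).trace))
      (d.det * d.trace ^ 2) (neg_pos.mpr (mul_neg_of_neg_of_pos h1 h2))
    refine ⟨k₀, hk₀, fun k hk hkk Λ hdet => ?_⟩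
    have hs := H k hk hkk
    obtain ⟨r₁, r₂, hf, hsum, hprod, hτ⟩ := aux_roots J d Λ₁ Λ₂ hcp k
    have hk2 : 0 < k ^ 2 := by have := abs_pos.mp hk; positivity
    have hk6 : 0 < k ^ 6 := by have := abs_pos.mp hk; positivity
    have hτ0 : 0 < d.trace := by
      by_contra hn
      nlinarith [mul_nonneg (sub_pos.mpr hΛ).le (neg_nonneg.mpr (not_lt.mp hn))]
    have hS : r₁.re + r₂.re < 0 := by rw [hsum]; nlinarith [mul_pos hk2 hτ0]
    have hP : 0 < r₁.re * r₂.re := by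
      have h := mul_le_mul_of_nonneg_left (neg_abs_le (d.det * d.trace ^ 2)) hk2.le
      have : 0 < r₁.re * r₂.re * ((r₁.re + r₂.re) ^ 2 + (r₁.im - r₂.im) ^ 2) := by
        rw [hprod]; exact mul_pos hk6 (by linarith)
      exact pos_of_mul_pos_left this (by positivity)
    have h12 : r₁.re < 0 ∧ r₂.re < 0 := by
      rcases pos_and_pos_or_neg_and_neg_of_mul_pos hP with h | h
      · linarith [h.1, h.2]
      · exact h
    rw [hf, mul_eq_zero, sub_eq_zero, sub_eq_zero] at hdet
    rcases hdet with rfl | rfl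
    · exact h12.1
    · exact h12.2
  · intro h
    -- in the unstable case, either the trace is negative or the Hurwitz determinant is
    have hcase : d.trace < 0 ∨
        0 < ((J - Λ₁ • 1).adjugate * d).trace * ((J - Λ₂ • 1).adjugate * d).trace := by
      obtain ⟨_, _, _, _, _, hτ⟩ := aux_roots J d Λ₁ Λ₂ hcp 0
      by_cases hn : d.trace < 0
      · exact Or.inl hn
      · right
        have := mul_nonneg (sub_pos.mpr hΛ).le (not_lt.mp hn)
        rcases h with h | h
        · exact mul_pos h (by linarith)
        · exact mul_pos_of_neg_of_neg (by linarith) h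
    have hex : ∃ k₀ : ℝ, 0 < k₀ ∧ ∀ k : ℝ, 0 < |k| → |k| < k₀ → d.trace < 0 ∨
        k ^ 2 * |d.det * d.trace ^ 2| <
          ((J - Λ₁ • 1).adjugate * d).trace * ((J - Λ₂ • 1).adjugate * d).trace := by
      rcases hcase with hc | hc
      · exact ⟨1, one_pos, fun _ _ _ => Or.inl hc⟩
      · obtain ⟨k₀, hk₀, H⟩ := aux_small _ (d.det * d.trace ^ 2) hc
        exact ⟨k₀, hk₀, fun k a b => Or.inr (H k a b)⟩
    obtain ⟨k₀, hk₀, H⟩ := hex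
    refine ⟨k₀, hk₀, fun k hk hkk => ?_⟩
    obtain ⟨r₁, r₂, hf, hsum, hprod, hτ⟩ := aux_roots J d Λ₁ Λ₂ hcp k
    have hk2 : 0 < k ^ 2 := by have := abs_pos.mp hk; positivity
    have hk6 : 0 < k ^ 6 := by have := abs_pos.mp hk; positivity
    have hr : 0 < r₁.re ∨ 0 < r₂.re := by
      by_contra hn
      push Not at hn
      rcases H k hk hkk with hc | hc
      · nlinarith [mul_pos hk2 (neg_pos.mpr hc), hn.1, hn.2]
      · have h := mul_le_mul_of_nonneg_left (le_abs_self (d.det * d.trace ^ 2)) hk2.le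
        have h3 : r₁.re * r₂.re * ((r₁.re + r₂.re) ^ 2 + (r₁.im - r₂.im) ^ 2) < 0 := by
          rw [hprod]; exact mul_neg_of_pos_of_neg hk6 (by linarith)
        have h4 := mul_nonneg (mul_nonneg_of_nonpos_of_nonpos hn.1 hn.2)
          (by positivity : 0 ≤ (r₁.re + r₂.re) ^ 2 + (r₁.im - r₂.im) ^ 2)
        linarith
    rcases hr with hr | hr
    · exact ⟨r₁, by rw [hf]; simp, hr⟩
    · exact ⟨r₂, by rw [hf]; simp, hr⟩
end
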